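/- arXiv:2209.09160 — 5 statements merged into one kernel-verified Lean document; each statement's English description precedes it below -/
import Mathlib

section
/- Let σ be a Borel probability measure on the circle 𝕋 = ℝ/ℤ that is mutually singular with respect to the Haar probability measure m. Then for every integer N ≥ 1 there exists an integer P ≥ 1 such that the number of indices k ∈ {0, …, P−1} with σ(I_{k,P}) < 1/(N·P) is strictly greater than (1 − 1/N)·P. -/
open MeasureTheory Filter Set
open scoped ENNReal

/-- The arc `I_{k,P}` of the circle `ℝ/ℤ`: the image of `[k/P, (k+1)/P)` under the
quotient map `ℝ → ℝ/ℤ`. -/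
noncomputable def arc (k P : ℕ) : Set (AddCircle (1 : ℝ)) :=
  (fun x : ℝ => (x : AddCircle (1 : ℝ))) '' Set.Ico ((k : ℝ) / P) (((k : ℝ) + 1) / P)

/-! Choose a compact set `K` that is null for Haar measure but carries almost all of `σ`. Arcs of
length `1/P` meeting `K` lie in its `1/P`-thickening, whose Haar measure tends to `0`, so only a
small proportion of the arcs meet `K`. The arcs missing `K` share the little `σ`-mass outside `K`,
so only a small proportion of them can carry mass of order `1/P`. -/

section Measure

lemma card_mul_le_measure_of_pairwiseDisjoint {α ι : Type*} [MeasurableSpace α] {μ : Measure α}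
    {t : Finset ι} {s : ι → Set α} {V : Set α} {c : ℝ≥0∞}
    (hdisj : (t : Set ι).PairwiseDisjoint s) (hmeas : ∀ i ∈ t, MeasurableSet (s i))
    (hsub : ∀ i ∈ t, s i ⊆ V) (hc : ∀ i ∈ t, c ≤ μ (s i)) :
    t.card * c ≤ μ V :=
  calc t.card * c = ∑ _i ∈ t, c := by simp
    _ ≤ ∑ i ∈ t, μ (s i) := Finset.sum_le_sum hc
    _ = μ (⋃ i ∈ t, s i) := (measure_biUnion_finset hdisj hmeas).symm
    _ ≤ μ V := measure_mono (iUnion₂_subset hsub)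

lemma exists_isCompact_null_measure_compl_lt {X : Type*} [TopologicalSpace X] [T2Space X]
    [MeasurableSpace X] [OpensMeasurableSpace X] {μ ν : Measure X} [IsFiniteMeasure μ]
    [μ.InnerRegularCompactLTTop] (h : μ.MutuallySingular ν) {ε : ℝ≥0∞} (hε : ε ≠ 0) :
    ∃ K, IsCompact K ∧ ν K = 0 ∧ μ Kᶜ < ε := by
  obtain ⟨K, hK_sub, hK, hμK⟩ := h.measurableSet_nullSet.compl.exists_isCompact_sdiff_lt
    (measure_ne_top μ _) hε
  refine ⟨K, hK, measure_mono_null hK_sub h.measure_compl_nullSet, ?_⟩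
  calc μ Kᶜ ≤ μ (h.nullSet ∪ h.nullSetᶜ \ K) := measure_mono fun x hx ↦
        (em (x ∈ h.nullSet)).imp_right fun hx' ↦ ⟨hx', hx⟩
    _ ≤ μ h.nullSet + μ (h.nullSetᶜ \ K) := measure_union_le _ _
    _ < ε := by rwa [h.measure_nullSet, zero_add]

end Measure

section AddCircle

variable {T : ℝ} [Fact (0 < T)] {a : ℝ} {I : Set ℝ}

lemma injOn_coe_addCircle_Ico : InjOn ((↑) : ℝ → AddCircle T) (Ico a (a + T)) :=
  fun _ hx _ hy ↦ (AddCircle.coe_eq_coe_iff_of_mem_Ico hx hy).1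

lemma measurableSet_image_coe_addCircle (hI : MeasurableSet I) (hsub : I ⊆ Ico a (a + T)) :
    MeasurableSet (((↑) : ℝ → AddCircle T) '' I) :=
  hI.image_of_continuousOn_injOn (AddCircle.continuous_mk' T).continuousOn
    (injOn_coe_addCircle_Ico.mono hsub)

lemma volume_image_coe_addCircle (hI : MeasurableSet I) (hsub : I ⊆ Ico a (a + T)) :
    volume (((↑) : ℝ → AddCircle T) '' I) = volume I :=
  calc volume (((↑) : ℝ → AddCircle T) '' I)
      = volume ((↑) ⁻¹' (((↑) : ℝ → AddCircle T) '' I) ∩ Ioc a (a + T)) :=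
        AddCircle.add_projection_respects_measure T a (measurableSet_image_coe_addCircle hI hsub)
    _ = volume ((↑) ⁻¹' (((↑) : ℝ → AddCircle T) '' I) ∩ Ico a (a + T)) :=
        measure_congr ((ae_eq_refl _).inter Ico_ae_eq_Ioc.symm)
    _ = volume I := by rw [injOn_coe_addCircle_Ico.preimage_image_inter hsub]

end AddCircle

section Arc

variable {k P : ℕ}

lemma Ico_div_subset_Ico_zero_one (hk : k < P) :
    Ico ((k : ℝ) / P) ((k + 1) / P) ⊆ Ico 0 (0 + 1) := by
  have hP : (0 : ℝ) < P := by exact_mod_cast k.zero_le.trans_lt hk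
  refine Ico_subset_Ico (by positivity) ?_
  rw [zero_add, div_le_one hP]
  exact_mod_cast hk

lemma measurableSet_arc (hk : k < P) : MeasurableSet (arc k P) :=
  measurableSet_image_coe_addCircle measurableSet_Ico (Ico_div_subset_Ico_zero_one hk)

lemma volume_arc (hk : k < P) : volume (arc k P) = 1 / P := by
  have hP : (0 : ℝ) < P := by exact_mod_cast k.zero_le.trans_lt hk
  rw [arc, volume_image_coe_addCircle measurableSet_Ico (Ico_div_subset_Ico_zero_one hk),
    Real.volume_Ico, ← sub_div, add_sub_cancel_left, ENNReal.ofReal_div_of_pos hP,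
    ENNReal.ofReal_one, ENNReal.ofReal_natCast]

lemma pairwiseDisjoint_arc (P : ℕ) : (Iio P).PairwiseDisjoint (arc · P) := by
  intro k hk l hl hkl
  have hmono : Monotone fun n : ℕ ↦ (n : ℝ) / P := Nat.mono_cast.div_const P.cast_nonneg
  have hIco : Disjoint (Ico ((k : ℝ) / P) ((k + 1) / P)) (Ico ((l : ℝ) / P) ((l + 1) / P)) := by
    simpa [Function.onFun] using hmono.pairwise_disjoint_on_Ico_succ hkl
  exact hIco.image injOn_coe_addCircle_Ico (Ico_div_subset_Ico_zero_one hk)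
    (Ico_div_subset_Ico_zero_one hl)

lemma dist_le_of_mem_arc {x y : AddCircle (1 : ℝ)} (hx : x ∈ arc k P) (hy : y ∈ arc k P) :
    dist x y ≤ 1 / P := by
  obtain ⟨a, ha, rfl⟩ := hx
  obtain ⟨b, hb, rfl⟩ := hy
  calc dist (a : AddCircle (1 : ℝ)) b = ‖((a - b : ℝ) : AddCircle (1 : ℝ))‖ := by
        rw [dist_eq_norm, AddCircle.coe_sub]
    _ ≤ |a - b| := QuotientAddGroup.norm_mk_le_norm
    _ ≤ (k + 1) / P - k / P := Real.dist_le_of_mem_Icc (Ico_subset_Icc_self ha)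
        (Ico_subset_Icc_self hb)
    _ = 1 / P := by ring

lemma arc_subset_cthickening {K : Set (AddCircle (1 : ℝ))} (h : ¬Disjoint (arc k P) K) :
    arc k P ⊆ Metric.cthickening (1 / P) K := by
  obtain ⟨y, hy, hyK⟩ := not_disjoint_iff.1 h
  exact fun x hx ↦ Metric.mem_cthickening_of_dist_le x y _ K hyK (dist_le_of_mem_arc hx hy)

lemma card_lt_mul_of_div_le_measure_arc {μ : Measure (AddCircle (1 : ℝ))} {t : Finset ℕ}
    {V : Set (AddCircle (1 : ℝ))} {c ε : ℝ≥0∞} (hP : P ≠ 0) (ht : ∀ k ∈ t, k < P)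
    (hsub : ∀ k ∈ t, arc k P ⊆ V) (hc : ∀ k ∈ t, c / P ≤ μ (arc k P)) (hV : μ V < ε * c) :
    t.card < ε * P := by
  by_contra! hcard
  refine hV.not_ge ?_
  calc ε * c = ε * P * (c / P) := by
        rw [mul_assoc, ENNReal.mul_div_cancel (by exact_mod_cast hP) (ENNReal.natCast_ne_top P)]
    _ ≤ t.card * (c / P) := by gcongr
    _ ≤ μ V := card_mul_le_measure_of_pairwiseDisjoint ((pairwiseDisjoint_arc P).subset ht)
        (fun k hk ↦ measurableSet_arc (ht k hk)) hsub hc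

end Arc

section Count

open scoped Classical in
/-- The indices `k < P` of the arcs `I_{k,P}` that meet `K`. -/
noncomputable def arcsMeeting (K : Set (AddCircle (1 : ℝ))) (P : ℕ) : Finset ℕ :=
  {k ∈ Finset.range P | ¬Disjoint (arc k P) K}

open scoped Classical in
/-- The indices `k < P` of the heavy arcs `I_{k,P}`, whose `μ`-measure is at least `c` times
their length `1/P`. -/
noncomputable def heavyArcs (μ : Measure (AddCircle (1 : ℝ))) (c : ℝ≥0∞) (P : ℕ) : Finset ℕ :=
  {k ∈ Finset.range P | c / P ≤ μ (arc k P)}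

variable {μ : Measure (AddCircle (1 : ℝ))} {K : Set (AddCircle (1 : ℝ))} {P : ℕ} {c ε : ℝ≥0∞}

@[simp]
lemma mem_arcsMeeting {k : ℕ} : k ∈ arcsMeeting K P ↔ k < P ∧ ¬Disjoint (arc k P) K := by
  simp [arcsMeeting]

@[simp]
lemma mem_heavyArcs {k : ℕ} : k ∈ heavyArcs μ c P ↔ k < P ∧ c / P ≤ μ (arc k P) := by
  simp [heavyArcs]

lemma eventually_card_arcsMeeting_lt (hK : IsCompact K) (hK₀ : volume K = 0) (hε : ε ≠ 0) :
    ∀ᶠ P : ℕ in atTop, ((arcsMeeting K P).card : ℝ≥0∞) < ε * P := by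
  have hlim : Tendsto (fun P : ℕ ↦ volume (Metric.cthickening (1 / (P : ℝ)) K)) atTop (nhds 0) :=
    hK₀ ▸ (tendsto_measure_cthickening_of_isCompact hK).comp tendsto_one_div_atTop_nhds_zero_nat
  filter_upwards [hlim.eventually_lt_const hε.pos, eventually_ne_atTop 0] with P hvol hP
  exact card_lt_mul_of_div_le_measure_arc hP (fun k hk ↦ (mem_arcsMeeting.1 hk).1)
    (fun k hk ↦ arc_subset_cthickening (mem_arcsMeeting.1 hk).2)
    (fun k hk ↦ (volume_arc (mem_arcsMeeting.1 hk).1).ge) (by rwa [mul_one])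

lemma card_heavyArcs_sdiff_arcsMeeting_lt (hP : P ≠ 0) (hK : μ Kᶜ < ε * c) :
    ((heavyArcs μ c P \ arcsMeeting K P).card : ℝ≥0∞) < ε * P := by
  have hmem : ∀ k ∈ heavyArcs μ c P \ arcsMeeting K P,
      k < P ∧ arc k P ⊆ Kᶜ ∧ c / P ≤ μ (arc k P) := by
    intro k hk
    simp only [Finset.mem_sdiff, mem_heavyArcs, mem_arcsMeeting, not_and, not_not] at hk
    exact ⟨hk.1.1, (hk.2 hk.1.1).subset_compl_right, hk.1.2⟩
  exact card_lt_mul_of_div_le_measure_arc hP (fun k hk ↦ (hmem k hk).1)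
    (fun k hk ↦ (hmem k hk).2.1) (fun k hk ↦ (hmem k hk).2.2) hK

lemma eventually_card_heavyArcs_lt [IsFiniteMeasure μ] (hsing : μ.MutuallySingular volume)
    (hc : c ≠ 0) (hε : ε ≠ 0) :
    ∀ᶠ P : ℕ in atTop, ((heavyArcs μ c P).card : ℝ≥0∞) < ε * P := by
  have hε₂ : ε / 2 ≠ 0 := (ENNReal.half_pos hε).ne'
  obtain ⟨K, hK, hK₀, hμK⟩ := exists_isCompact_null_measure_compl_lt hsing (mul_ne_zero hε₂ hc)
  filter_upwards [eventually_card_arcsMeeting_lt hK hK₀ hε₂, eventually_ne_atTop 0]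
    with P hmeet hP
  calc ((heavyArcs μ c P).card : ℝ≥0∞)
      ≤ (heavyArcs μ c P \ arcsMeeting K P).card + (arcsMeeting K P).card := by
        exact_mod_cast Finset.card_le_card_sdiff_add_card
    _ < ε / 2 * P + ε / 2 * P :=
        ENNReal.add_lt_add (card_heavyArcs_sdiff_arcsMeeting_lt hP hμK) hmeet
    _ = ε * P := by rw [← add_mul, ENNReal.add_halves]

lemma ncard_light_arcs_add_card_heavyArcs :
    {k : ℕ | k < P ∧ μ (arc k P) < c / P}.ncard + (heavyArcs μ c P).card = P := by
  have hlight : {k : ℕ | k < P ∧ μ (arc k P) < c / P} = ↑(Finset.range P \ heavyArcs μ c P) := by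
    ext k
    simp +contextual
  have hsub : heavyArcs μ c P ⊆ Finset.range P := fun k hk ↦
    Finset.mem_range.2 (mem_heavyArcs.1 hk).1
  rw [hlight, ncard_coe_finset, Finset.card_sdiff_add_card_eq_card hsub, Finset.card_range]

end Count

theorem singular_implies_small_arcs_general
    (σ : Measure (AddCircle (1 : ℝ))) [IsFiniteMeasure σ]
    (hsing : σ.MutuallySingular volume) (N : ℕ) (hN : 1 ≤ N) :
    ∀ᶠ P : ℕ in atTop, (1 - 1 / (N : ℝ)) * (P : ℝ) <
      ({k : ℕ | k < P ∧ σ (arc k P) < 1 / ((N : ℝ≥0∞) * (P : ℝ≥0∞))}.ncard : ℝ) := by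
  have hN' : (N : ℝ≥0∞)⁻¹ ≠ 0 := by simp
  filter_upwards [eventually_card_heavyArcs_lt hsing hN' hN'] with P hheavy
  have hthreshold : 1 / ((N : ℝ≥0∞) * P) = (N : ℝ≥0∞)⁻¹ / P := by
    rw [one_div, ENNReal.mul_inv (by simp) (by simp), div_eq_mul_inv]
  have hheavy' : ((heavyArcs σ (N : ℝ≥0∞)⁻¹ P).card : ℝ) < 1 / N * P := by
    have hfin : (N : ℝ≥0∞)⁻¹ * P ≠ ∞ :=
      ENNReal.mul_ne_top (ENNReal.inv_ne_top.2 (by positivity)) (ENNReal.natCast_ne_top P)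
    simpa using ENNReal.toReal_strict_mono hfin hheavy
  have hcount : ({k : ℕ | k < P ∧ σ (arc k P) < (N : ℝ≥0∞)⁻¹ / P}.ncard : ℝ) +
      (heavyArcs σ (N : ℝ≥0∞)⁻¹ P).card = P :=
    mod_cast ncard_light_arcs_add_card_heavyArcs
  rw [hthreshold]
  linarith

/-- If a Borel probability measure `σ` on the circle is mutually singular with respect to
Haar measure, then for every `N ≥ 1` there is `P ≥ 1` such that the number of `k < P`
with `σ(I_{k,P}) < 1/(N·P)` exceeds `(1 - 1/N)·P`. -/
theorem singular_implies_small_arcs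
    (σ : Measure (AddCircle (1 : ℝ))) [IsProbabilityMeasure σ]
    (hsing : σ.MutuallySingular volume) :
    ∀ N : ℕ, 1 ≤ N → ∃ P : ℕ, 1 ≤ P ∧
      (1 - 1 / (N : ℝ)) * (P : ℝ) <
        (({k : ℕ | k < P ∧ σ (arc k P) < 1 / ((N : ℝ≥0∞) * (P : ℝ≥0∞))}.ncard : ℝ)) := by
  intro N hN
  exact ((eventually_ge_atTop 1).and (singular_implies_small_arcs_general σ hsing N hN)).exists
end

section
/- Let σ be a finite Borel measure on the circle 𝕋 = ℝ/ℤ. Suppose that for every integer N ≥ 1 there exists an integer P ≥ 1 such that the number of indices k ∈ {0, …, P−1} with σ(I_{k,P}) < 1/(N·P) is strictly greater than (1 − 1/N)·P. Then σ is mutually singular with respect to the Haar measure m. -/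
open MeasureTheory Filter Set
open scoped ENNReal

/-!
Let `G` be the union of the arcs `I_{k,P}` with `σ(I_{k,P}) < 1/(N·P)`. There are at most `P` of
them, so `σ(G) ≤ 1/N`; fewer than `P/N` arcs are left over, each of Haar measure `1/P`, so the
complement of `G` has Haar measure at most `1/N`. A measure dominated by both `σ` and Haar measure
therefore has total mass at most `2/N` for every `N`, hence vanishes, and measures whose infimum is
zero are mutually singular.
-/

section Measure

variable {α ι : Type*} [MeasurableSpace α] {μ ν : Measure α} {A : ι → Set α}

lemma mutuallySingular_of_forall_exists_measure_le
    (h : ∀ ε : ℝ≥0∞, ε ≠ 0 → ∃ s, μ s ≤ ε ∧ ν sᶜ ≤ ε) : μ ⟂ₘ ν := by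
  refine Measure.mutuallySingular_of_disjoint fun ξ hξμ hξν => ?_
  suffices ξ univ ≤ 0 from (Measure.measure_univ_eq_zero.1 (nonpos_iff_eq_zero.1 this)).le
  refine le_of_forall_pos_le_add fun ε hε => ?_
  obtain ⟨s, hμs, hνs⟩ := h (ε / 2) (ENNReal.half_pos hε.ne').ne'
  calc ξ univ = ξ (s ∪ sᶜ) := by rw [union_compl_self]
    _ ≤ ξ s + ξ sᶜ := measure_union_le s sᶜ
    _ ≤ ε / 2 + ε / 2 := add_le_add ((hξμ s).trans hμs) ((hξν sᶜ).trans hνs)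
    _ = 0 + ε := by rw [ENNReal.add_halves, zero_add]

lemma measure_biUnion_finset_le_card_mul {s : Finset ι} {c : ℝ≥0∞}
    (h : ∀ i ∈ s, μ (A i) ≤ c) : μ (⋃ i ∈ s, A i) ≤ s.card * c :=
  calc μ (⋃ i ∈ s, A i) ≤ ∑ i ∈ s, μ (A i) := measure_biUnion_finset_le s A
    _ ≤ s.card • c := Finset.sum_le_card_nsmul s _ c h
    _ = s.card * c := nsmul_eq_mul _ _

lemma measure_biUnion_finset_le_of_le_div {s : Finset ι} {n : ℕ} {c : ℝ≥0∞}
    (hs : s.card ≤ n) (h : ∀ i ∈ s, μ (A i) ≤ c / n) : μ (⋃ i ∈ s, A i) ≤ c :=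
  calc μ (⋃ i ∈ s, A i) ≤ s.card * (c / n) := measure_biUnion_finset_le_card_mul h
    _ ≤ n * (c / n) := by gcongr
    _ ≤ c := ENNReal.mul_div_le

end Measure

lemma compl_biUnion_subset_biUnion_sdiff {α ι : Type*} [DecidableEq ι] {A : ι → Set α}
    {s : Finset ι} (hs : ⋃ i ∈ s, A i = univ) (t : Finset ι) :
    (⋃ i ∈ t, A i)ᶜ ⊆ ⋃ i ∈ s \ t, A i := by
  rw [compl_subset_iff_union, ← Finset.set_biUnion_union, Finset.union_sdiff_self_eq_union,
    Finset.set_biUnion_union, hs, union_univ]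

lemma volume_coe_image_Icc_le {T : ℝ} [Fact (0 < T)] (a b : ℝ) :
    volume ((↑) '' Icc a b : Set (AddCircle T)) ≤ ENNReal.ofReal (b - a) := by
  have hsub : ((↑) '' Icc a b : Set (AddCircle T)) ⊆
      Metric.closedBall (((a + b) / 2 : ℝ) : AddCircle T) ((b - a) / 2) := by
    rintro _ ⟨x, hx, rfl⟩
    rw [Real.Icc_eq_closedBall, mem_closedBall_iff_norm] at hx
    rw [mem_closedBall_iff_norm, ← AddCircle.coe_sub]
    exact QuotientAddGroup.norm_mk_le_norm.trans hx
  calc volume ((↑) '' Icc a b : Set (AddCircle T))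
      ≤ volume (Metric.closedBall (((a + b) / 2 : ℝ) : AddCircle T) ((b - a) / 2)) :=
        measure_mono hsub
    _ = ENNReal.ofReal (min T (2 * ((b - a) / 2))) := AddCircle.volume_closedBall T _
    _ ≤ ENNReal.ofReal (b - a) :=
        ENNReal.ofReal_le_ofReal ((min_le_right _ _).trans_eq (mul_div_cancel₀ _ two_ne_zero))

lemma volume_arc_le (k P : ℕ) : volume (arc k P) ≤ ENNReal.ofReal (1 / P) :=
  calc volume (arc k P)
      ≤ volume ((↑) '' Icc ((k : ℝ) / P) ((k + 1) / P) : Set (AddCircle (1 : ℝ))) :=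
        measure_mono (image_mono Ico_subset_Icc_self)
    _ ≤ ENNReal.ofReal (((k : ℝ) + 1) / P - k / P) := volume_coe_image_Icc_le _ _
    _ = ENNReal.ofReal (1 / P) := by rw [← sub_div, add_sub_cancel_left]

lemma biUnion_range_arc {P : ℕ} (hP : P ≠ 0) : ⋃ k ∈ Finset.range P, arc k P = univ := by
  have hP' : (0 : ℝ) < P := by positivity
  refine eq_univ_of_forall fun x => ?_
  obtain ⟨t, ⟨ht0, ht1⟩, rfl⟩ : x ∈ (↑) '' Ico (0 : ℝ) (0 + 1) :=
    AddCircle.coe_image_Ico_eq (1 : ℝ) 0 ▸ mem_univ x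
  have htP : 0 ≤ t * P := by positivity
  have hfloor : ⌊t * P⌋₊ < P := by
    rw [Nat.floor_lt htP]
    exact mul_lt_of_lt_one_left hP' (ht1.trans_eq (zero_add 1))
  refine mem_biUnion (Finset.mem_range.2 hfloor) ⟨t, ⟨?_, ?_⟩, rfl⟩
  · exact (div_le_iff₀ hP').2 (Nat.floor_le htP)
  · exact (lt_div_iff₀ hP').2 (Nat.lt_floor_add_one _)

lemma volume_compl_biUnion_arc_le {P : ℕ} {t : Finset ℕ} (hP : P ≠ 0)
    (ht : t ⊆ Finset.range P) :
    volume (⋃ k ∈ t, arc k P)ᶜ ≤ ENNReal.ofReal (1 - t.card / P) := by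
  have hcard : ((Finset.range P \ t).card : ℝ) = P - t.card := by
    rw [Finset.cast_card_sdiff ht, Finset.card_range]
  calc volume (⋃ k ∈ t, arc k P)ᶜ
      ≤ volume (⋃ k ∈ Finset.range P \ t, arc k P) :=
        measure_mono (compl_biUnion_subset_biUnion_sdiff (biUnion_range_arc hP) t)
    _ ≤ (Finset.range P \ t).card * ENNReal.ofReal (1 / P) :=
        measure_biUnion_finset_le_card_mul fun k _ => volume_arc_le k P
    _ = ENNReal.ofReal ((P - t.card) * (1 / P)) := by
        rw [← hcard, ENNReal.ofReal_mul (Nat.cast_nonneg _), ENNReal.ofReal_natCast]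
    _ = ENNReal.ofReal (1 - t.card / P) := by
        rw [mul_one_div, sub_div, div_self (Nat.cast_ne_zero.2 hP)]

lemma exists_measure_le_inv_and_volume_compl_le {σ : Measure (AddCircle (1 : ℝ))} {N P : ℕ}
    (hN : N ≠ 0) (hP : P ≠ 0)
    (hcard : (1 - 1 / (N : ℝ)) * P <
      {k : ℕ | k < P ∧ σ (arc k P) < 1 / ((N : ℝ≥0∞) * P)}.ncard) :
    ∃ s, σ s ≤ (N : ℝ≥0∞)⁻¹ ∧ volume sᶜ ≤ (N : ℝ≥0∞)⁻¹ := by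
  obtain ⟨t, ht⟩ := ((finite_lt_nat P).subset fun _ hk => hk.1 :
    {k : ℕ | k < P ∧ σ (arc k P) < 1 / ((N : ℝ≥0∞) * P)}.Finite).exists_finset_coe
  have mem_t (k : ℕ) : k ∈ t ↔ k < P ∧ σ (arc k P) < 1 / ((N : ℝ≥0∞) * P) :=
    Set.ext_iff.1 ht k
  have ht_range : t ⊆ Finset.range P := fun k hk => Finset.mem_range.2 ((mem_t k).1 hk).1
  have ht_card : t.card ≤ P := (Finset.card_le_card ht_range).trans_eq (Finset.card_range P)
  have hσ (k : ℕ) (hk : k ∈ t) : σ (arc k P) ≤ (N : ℝ≥0∞)⁻¹ / P := by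
    rw [div_eq_mul_inv, ← ENNReal.mul_inv (by simp) (by simp), ← one_div]
    exact ((mem_t k).1 hk).2.le
  have hremaining : 1 - (t.card : ℝ) / P ≤ 1 / N := by
    rw [← ht, ncard_coe_finset, ← lt_div_iff₀ (by positivity)] at hcard
    linarith
  refine ⟨⋃ k ∈ t, arc k P, measure_biUnion_finset_le_of_le_div ht_card hσ, ?_⟩
  calc volume (⋃ k ∈ t, arc k P)ᶜ ≤ ENNReal.ofReal (1 - t.card / P) :=
        volume_compl_biUnion_arc_le hP ht_range
    _ ≤ ENNReal.ofReal (1 / N) := ENNReal.ofReal_le_ofReal hremaining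
    _ = (N : ℝ≥0∞)⁻¹ := by
        rw [one_div, ENNReal.ofReal_inv_of_pos (by positivity), ENNReal.ofReal_natCast]

theorem small_arcs_implies_singular_general
    (σ : Measure (AddCircle (1 : ℝ)))
    (h : ∀ N : ℕ, 1 ≤ N → ∃ P : ℕ, 1 ≤ P ∧
      (1 - 1 / (N : ℝ)) * (P : ℝ) <
        (({k : ℕ | k < P ∧ σ (arc k P) < 1 / ((N : ℝ≥0∞) * (P : ℝ≥0∞))}.ncard : ℝ))) :
    σ.MutuallySingular volume := by
  refine mutuallySingular_of_forall_exists_measure_le fun ε hε => ?_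
  obtain ⟨N, hNε⟩ := ENNReal.exists_inv_nat_lt hε
  have hN : N ≠ 0 := by
    rintro rfl
    simp at hNε
  obtain ⟨P, hP, hcard⟩ := h N (Nat.one_le_iff_ne_zero.2 hN)
  obtain ⟨s, hσs, hvol⟩ :=
    exists_measure_le_inv_and_volume_compl_le hN (Nat.one_le_iff_ne_zero.1 hP) hcard
  exact ⟨s, hσs.trans hNε.le, hvol.trans hNε.le⟩

/-- If a finite Borel measure `σ` on the circle satisfies: for every `N ≥ 1` there is `P ≥ 1`
such that the number of `k < P` with `σ(I_{k,P}) < 1/(N·P)` exceeds `(1 - 1/N)·P`, then `σ` is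
mutually singular with respect to Haar measure. -/
theorem small_arcs_implies_singular
    (σ : Measure (AddCircle (1 : ℝ))) [IsFiniteMeasure σ]
    (h : ∀ N : ℕ, 1 ≤ N → ∃ P : ℕ, 1 ≤ P ∧
      (1 - 1 / (N : ℝ)) * (P : ℝ) <
        (({k : ℕ | k < P ∧ σ (arc k P) < 1 / ((N : ℝ≥0∞) * (P : ℝ≥0∞))}.ncard : ℝ))) :
    σ.MutuallySingular volume :=
  small_arcs_implies_singular_general σ h
end

section
/- Let (X, μ) and (Y, ν) be probability spaces, S an automorphism of (X, μ) and T an automorphism of (Y, ν), and let (m_j) be a strictly increasing sequence of natural numbers such that: (a) S is rigid along (m_j), i.e., μ(A Δ S^{m_j} A) → 0 for every measurable A ⊆ X; (b) for every measurable B ⊆ Y, 4·ν(B ∩ T^{m_j} B ∩ T^{3 m_j} B) → ν(B) + ν(B)² + 2·ν(B)³ as j → ∞. Let R = S × T be the automorphism of the product probability space (X × Y, μ ⊗ ν) given by R(x, y) = (S x, T y). Then for every measurable set C ⊆ X × Y, writing e = (μ ⊗ ν)(C), one has liminf_{j→∞} (μ ⊗ ν)(C ∩ R^{m_j} C ∩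 R^{3 m_j} C) ≥ (e + e² + 2e³)/4. -/
open MeasureTheory Filter
open scoped ENNReal symmDiff

/-!
Write `S^n × T^n` as `(S^n × id) ∘ (id × T^n)`. By Fubini over the horizontal sections of `C`,
`S^{m_j} × id` is rigid, so passing from `R = S × T` to `id × T` costs only `o(1)`.
For `id × T` the intersection splits over the vertical sections `C_x`, each of which satisfies the
recurrence bound; Fatou's lemma integrates these bounds, and Jensen's inequality for the convex
function `φ t = (t + t² + 2t³)/4` gives `∫ φ(ν(C_x)) dμ ≥ φ(∫ ν(C_x) dμ) = φ(e)`.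
-/

section ProductRecurrence

variable {ι κ X Y Z : Type*} [MeasurableSpace X] [MeasurableSpace Y] [MeasurableSpace Z]

/-- A family of maps `p i` is rigid along the filter `l` if `ρ (A ∆ p i ⁻¹ A) → 0` for every
measurable `A`. It is phrased with preimages, so that noninvertible maps are allowed; for an
automorphism `S`, rigidity along `(m_j)` is the case `p j = S⁻¹^[m j]`. -/
def IsRigid (ρ : Measure Z) (p : ι → Z → Z) (l : Filter ι) : Prop :=
  ∀ A, MeasurableSet A → Tendsto (fun i ↦ ρ (A ∆ (p i ⁻¹' A))) l (nhds 0)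

namespace IsRigid

variable {l : Filter ι}

theorem iterate {ρ : Measure Z} {p : ι → Z → Z} (h : IsRigid ρ p l)
    (hp : ∀ i, MeasurePreserving (p i) ρ ρ) (k : ℕ) : IsRigid ρ (fun i ↦ (p i)^[k]) l := by
  intro A hA
  have hk : Tendsto (fun i ↦ k • ρ (A ∆ (p i ⁻¹' A))) l (nhds 0) := by
    simpa only [nsmul_eq_mul, mul_zero] using
      ENNReal.Tendsto.const_mul (h A hA) (.inr (ENNReal.natCast_ne_top k))
  exact tendsto_of_tendsto_of_tendsto_of_le_of_le tendsto_const_nhds hk (fun _ ↦ zero_le)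
    fun i ↦ (hp i).measure_symmDiff_preimage_iterate_le hA.nullMeasurableSet k

theorem prodMap_id [l.IsCountablyGenerated] {μ : Measure X} [IsFiniteMeasure μ]
    {p : ι → X → X} (h : IsRigid μ p l) (hp : ∀ i, Measurable (p i))
    (ν : Measure Y) [IsFiniteMeasure ν] :
    IsRigid (μ.prod ν) (fun i ↦ Prod.map (p i) id) l := by
  intro C hC
  have hmeas (i : ι) : MeasurableSet (C ∆ (Prod.map (p i) id ⁻¹' C)) :=
    hC.symmDiff (((hp i).prodMap measurable_id) hC)
  simp only [fun i ↦ Measure.prod_apply_symm (μ := μ) (ν := ν) (hmeas i)]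
  rw [← lintegral_zero (μ := ν)]
  exact tendsto_lintegral_filter_of_dominated_convergence (fun _ ↦ μ Set.univ)
    (.of_forall fun i ↦ measurable_measure_prodMk_right (hmeas i))
    (.of_forall fun i ↦ .of_forall fun y ↦ measure_mono (Set.subset_univ _))
    (by rw [lintegral_const]; finiteness)
    (.of_forall fun y ↦ h _ (measurable_prodMk_right hC))

end IsRigid

theorem measure_biInter_preimage_le_add_sum (ρ : Measure Z) (K : Finset κ) {f g : κ → Z → Z}
    (hf : ∀ k, Measurable (f k)) (hg : ∀ k, MeasurePreserving (g k) ρ ρ) {C : Set Z}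
    (hC : MeasurableSet C) :
    ρ (⋂ k ∈ K, g k ⁻¹' C) ≤
      ρ (⋂ k ∈ K, (f k ∘ g k) ⁻¹' C) + ∑ k ∈ K, ρ (C ∆ (f k ⁻¹' C)) := by
  have hsub : ⋂ k ∈ K, g k ⁻¹' C ⊆
      (⋂ k ∈ K, (f k ∘ g k) ⁻¹' C) ∪ ⋃ k ∈ K, g k ⁻¹' (C ∆ (f k ⁻¹' C)) := by
    intro z hz
    simp only [Set.mem_union, Set.mem_iUnion₂, Set.mem_iInter₂, Set.mem_preimage,
      Set.mem_symmDiff, Function.comp_apply] at hz ⊢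
    by_contra! ⟨⟨k, hk, hfg⟩, hsd⟩
    exact hfg ((hsd k hk).1 (hz k hk))
  calc ρ (⋂ k ∈ K, g k ⁻¹' C)
      ≤ ρ (⋂ k ∈ K, (f k ∘ g k) ⁻¹' C) + ρ (⋃ k ∈ K, g k ⁻¹' (C ∆ (f k ⁻¹' C))) :=
        (measure_mono hsub).trans (measure_union_le _ _)
    _ ≤ ρ (⋂ k ∈ K, (f k ∘ g k) ⁻¹' C) + ∑ k ∈ K, ρ (g k ⁻¹' (C ∆ (f k ⁻¹' C))) := by
        gcongr
        exact measure_biUnion_finset_le K _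
    _ = ρ (⋂ k ∈ K, (f k ∘ g k) ⁻¹' C) + ∑ k ∈ K, ρ (C ∆ (f k ⁻¹' C)) := by
        simp only [fun k ↦
          (hg k).measure_preimage (hC.symmDiff (hf k hC)).nullMeasurableSet]

theorem IsRigid.liminf_measure_biInter_preimage_le {ρ : Measure Z} {l : Filter ι} (K : Finset κ)
    {f g : κ → ι → Z → Z} (h : ∀ k, IsRigid ρ (f k) l) (hf : ∀ k i, Measurable (f k i))
    (hg : ∀ k i, MeasurePreserving (g k i) ρ ρ) {C : Set Z} (hC : MeasurableSet C) :
    liminf (fun i ↦ ρ (⋂ k ∈ K, g k i ⁻¹' C)) l ≤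
      liminf (fun i ↦ ρ (⋂ k ∈ K, (f k i ∘ g k i) ⁻¹' C)) l := by
  have herr : Tendsto (fun i ↦ ∑ k ∈ K, ρ (C ∆ (f k i ⁻¹' C))) l (nhds 0) := by
    simpa only [Finset.sum_const_zero] using tendsto_finsetSum K fun k _ ↦ h k C hC
  calc liminf (fun i ↦ ρ (⋂ k ∈ K, g k i ⁻¹' C)) l
      ≤ liminf ((fun i ↦ ρ (⋂ k ∈ K, (f k i ∘ g k i) ⁻¹' C)) +
          fun i ↦ ∑ k ∈ K, ρ (C ∆ (f k i ⁻¹' C))) l :=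
        liminf_le_liminf <| .of_forall fun i ↦
          measure_biInter_preimage_le_add_sum ρ K (fun k ↦ hf k i) (fun k ↦ hg k i) hC
    _ = liminf (fun i ↦ ρ (⋂ k ∈ K, (f k i ∘ g k i) ⁻¹' C)) l :=
        ENNReal.liminf_add_of_right_tendsto_zero herr _

theorem lintegral_liminf_measure_prodMk_le {l : Filter ι} [l.IsCountablyGenerated]
    (μ : Measure X) (ν : Measure Y) [SFinite ν] {E : ι → Set (X × Y)}
    (hE : ∀ i, MeasurableSet (E i)) :
    ∫⁻ x, liminf (fun i ↦ ν (Prod.mk x ⁻¹' E i)) l ∂μ ≤ liminf (fun i ↦ (μ.prod ν) (E i)) l := by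
  simp only [Measure.prod_apply (hE _)]
  exact lintegral_liminf_le fun i ↦ measurable_measure_prodMk_left (hE i)

theorem ofReal_integral_le_lintegral_ofReal (μ : Measure X) (f : X → ℝ) :
    ENNReal.ofReal (∫ x, f x ∂μ) ≤ ∫⁻ x, ENNReal.ofReal (f x) ∂μ := by
  by_cases hf : Integrable f μ
  · rw [integral_eq_lintegral_pos_part_sub_lintegral_neg_part hf]
    exact ENNReal.ofReal_le_of_le_toReal (sub_le_self _ ENNReal.toReal_nonneg)
  · simp [integral_undef hf]

theorem integrable_comp_of_continuousOn {μ : Measure X} [IsFiniteMeasure μ] {s : Set ℝ}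
    (hs : IsCompact s) {φ : ℝ → ℝ} (hφ : ContinuousOn φ s) {f : X → ℝ} (hf : Measurable f)
    (hfs : ∀ x, f x ∈ s) : Integrable (φ ∘ f) μ := by
  obtain ⟨b, hb⟩ := hs.exists_bound_of_continuousOn hφ
  have hmeas : Measurable (φ ∘ f) :=
    (continuousOn_iff_continuous_domRestrict.1 hφ).measurable.comp (hf.subtype_mk (h := hfs))
  exact .of_bound hmeas.aestronglyMeasurable b (.of_forall fun x ↦ hb _ (hfs x))

theorem integral_measureReal_prodMk (μ : Measure X) (ν : Measure Y) [IsFiniteMeasure ν]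
    {C : Set (X × Y)} (hC : MeasurableSet C) :
    ∫ x, ν.real (Prod.mk x ⁻¹' C) ∂μ = (μ.prod ν).real C := by
  simp only [Measure.real, Measure.prod_apply hC]
  exact integral_toReal (measurable_measure_prodMk_left hC).aemeasurable
    (.of_forall fun x ↦ measure_lt_top _ _)

theorem ofReal_map_measureReal_prod_le_lintegral (μ : Measure X) (ν : Measure Y)
    [IsProbabilityMeasure μ] [IsProbabilityMeasure ν] {φ : ℝ → ℝ}
    (hφ : ConvexOn ℝ (Set.Icc 0 1) φ) (hφc : ContinuousOn φ (Set.Icc 0 1))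
    {C : Set (X × Y)} (hC : MeasurableSet C) :
    ENNReal.ofReal (φ ((μ.prod ν).real C)) ≤
      ∫⁻ x, ENNReal.ofReal (φ (ν.real (Prod.mk x ⁻¹' C))) ∂μ := by
  have hmem (x : X) : ν.real (Prod.mk x ⁻¹' C) ∈ Set.Icc 0 1 :=
    ⟨measureReal_nonneg, measureReal_le_one⟩
  have hmeas : Measurable fun x ↦ ν.real (Prod.mk x ⁻¹' C) :=
    (measurable_measure_prodMk_left hC).ennreal_toReal
  have jensen : φ ((μ.prod ν).real C) ≤ ∫ x, φ (ν.real (Prod.mk x ⁻¹' C)) ∂μ := by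
    rw [← integral_measureReal_prodMk μ ν hC]
    exact hφ.map_integral_le hφc isClosed_Icc (.of_forall hmem)
      (integrable_comp_of_continuousOn isCompact_Icc continuousOn_id hmeas hmem)
      (integrable_comp_of_continuousOn isCompact_Icc hφc hmeas hmem)
  exact (ENNReal.ofReal_le_ofReal jensen).trans (ofReal_integral_le_lintegral_ofReal μ _)

theorem le_liminf_measureReal_iff {l : Filter ι} [l.NeBot] {ρ : Measure Z} [IsFiniteMeasure ρ]
    {E : ι → Set Z} {c : ℝ} :
    c ≤ liminf (fun i ↦ ρ.real (E i)) l ↔ ENNReal.ofReal c ≤ liminf (fun i ↦ ρ (E i)) l := by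
  have hle (i : ι) : ρ (E i) ≤ ρ Set.univ := measure_mono (Set.subset_univ _)
  have hlim : liminf (fun i ↦ ρ (E i)) l ≠ ∞ :=
    ((liminf_le_of_frequently_le' (.of_forall hle)).trans_lt (measure_lt_top ρ _)).ne
  rw [ENNReal.ofReal_le_iff_le_toReal hlim,
    ← ENNReal.liminf_toReal_eq (measure_ne_top ρ Set.univ) (.of_forall hle)]
  rfl

theorem convexOn_add_sq_add_two_mul_cube_div_four :
    ConvexOn ℝ (Set.Icc 0 1) fun t : ℝ ↦ (t + t ^ 2 + 2 * t ^ 3) / 4 := by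
  have h : ConvexOn ℝ (Set.Ici 0) fun t : ℝ ↦ (4⁻¹ : ℝ) • (t + t ^ 2 + (2 : ℝ) • t ^ 3) :=
    (((convexOn_id (convex_Ici 0)).add (convexOn_pow 2)).add
      ((convexOn_pow 3).smul zero_le_two)).smul (by norm_num)
  simpa only [smul_eq_mul, div_eq_inv_mul] using
    h.subset Set.Icc_subset_Ici_self (convex_Icc 0 1)

theorem image_iterate_eq_preimage_symm_iterate (e : Z ≃ᵐ Z) (n : ℕ) (A : Set Z) :
    e^[n] '' A = e.symm^[n] ⁻¹' A :=
  congrFun (Set.image_eq_preimage_of_inverse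
    (Function.LeftInverse.iterate e.symm_apply_apply n)
    (Function.RightInverse.iterate e.apply_symm_apply n)) A

theorem inter_image_iterate_inter_image_iterate_three_mul (e : Z ≃ᵐ Z) (n : ℕ) (A : Set Z) :
    A ∩ e^[n] '' A ∩ e^[3 * n] '' A =
      ⋂ k ∈ ({0, 1, 3} : Finset ℕ), e.symm^[n * k] ⁻¹' A := by
  simp [image_iterate_eq_preimage_symm_iterate, Set.inter_assoc, mul_comm n 3]

theorem prodCongr_symm_iterate (S : X ≃ᵐ X) (T : Y ≃ᵐ Y) (n : ℕ) :
    (S.prodCongr T).symm^[n] = Prod.map S.symm^[n] T.symm^[n] :=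
  Prod.map_iterate _ _ n

theorem isRigid_symm_iterate_mul {ρ : Measure Z} {l : Filter ι} {e : Z ≃ᵐ Z}
    (he : MeasurePreserving e ρ ρ) {m : ι → ℕ}
    (h : ∀ A, MeasurableSet A → Tendsto (fun i ↦ ρ (A ∆ (e^[m i] '' A))) l (nhds 0)) (k : ℕ) :
    IsRigid ρ (fun i ↦ e.symm^[m i * k]) l := by
  simp only [image_iterate_eq_preimage_symm_iterate] at h
  simpa only [Function.iterate_mul] using
    IsRigid.iterate h (fun i ↦ (he.symm e).iterate (m i)) k

theorem product_triple_intersection_liminf_general {l : Filter ι} [l.NeBot]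
    [l.IsCountablyGenerated] (μ : Measure X) (ν : Measure Y) [IsProbabilityMeasure μ]
    [IsProbabilityMeasure ν] (K : Finset κ) {p : κ → ι → X → X} {q : κ → ι → Y → Y}
    (hp : ∀ k i, Measurable (p k i)) (hq : ∀ k i, MeasurePreserving (q k i) ν ν)
    (hrigid : ∀ k, IsRigid μ (p k) l) {φ : ℝ → ℝ} (hφ : ConvexOn ℝ (Set.Icc 0 1) φ)
    (hφc : ContinuousOn φ (Set.Icc 0 1))
    (hrec : ∀ B, MeasurableSet B →
      φ (ν.real B) ≤ liminf (fun i ↦ ν.real (⋂ k ∈ K, q k i ⁻¹' B)) l)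
    {C : Set (X × Y)} (hC : MeasurableSet C) :
    φ ((μ.prod ν).real C) ≤
      liminf (fun i ↦ (μ.prod ν).real (⋂ k ∈ K, Prod.map (p k i) (q k i) ⁻¹' C)) l := by
  simp only [le_liminf_measureReal_iff] at hrec ⊢
  have hidq (k : κ) (i : ι) : MeasurePreserving (Prod.map id (q k i)) (μ.prod ν) (μ.prod ν) :=
    (MeasurePreserving.id μ).prod (hq k i)
  have hmeas (i : ι) : MeasurableSet (⋂ k ∈ K, Prod.map id (q k i) ⁻¹' C) :=
    K.measurableSet_biInter fun k _ ↦ (hidq k i).measurable hC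
  calc ENNReal.ofReal (φ ((μ.prod ν).real C))
      ≤ ∫⁻ x, ENNReal.ofReal (φ (ν.real (Prod.mk x ⁻¹' C))) ∂μ :=
        ofReal_map_measureReal_prod_le_lintegral μ ν hφ hφc hC
    _ ≤ ∫⁻ x, liminf (fun i ↦ ν (⋂ k ∈ K, q k i ⁻¹' (Prod.mk x ⁻¹' C))) l ∂μ :=
        lintegral_mono fun x ↦ hrec _ (measurable_prodMk_left hC)
    _ = ∫⁻ x, liminf (fun i ↦ ν (Prod.mk x ⁻¹' ⋂ k ∈ K, Prod.map id (q k i) ⁻¹' C)) l ∂μ := by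
        simp only [Set.preimage_iInter₂]
        rfl
    _ ≤ liminf (fun i ↦ (μ.prod ν) (⋂ k ∈ K, Prod.map id (q k i) ⁻¹' C)) l :=
        lintegral_liminf_measure_prodMk_le μ ν hmeas
    _ ≤ liminf (fun i ↦ (μ.prod ν) (⋂ k ∈ K, Prod.map (p k i) (q k i) ⁻¹' C)) l :=
        IsRigid.liminf_measure_biInter_preimage_le K (fun k ↦ (hrigid k).prodMap_id (hp k) ν)
          (fun k i ↦ (hp k i).prodMap measurable_id) hidq hC

end ProductRecurrence

/-- If `S` is rigid along `(m_j)` and `T` satisfies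
`4 ν(B ∩ T^{m_j} B ∩ T^{3 m_j} B) → ν(B) + ν(B)² + 2 ν(B)³`, then for the product
automorphism `R = S × T` and every measurable `C`, with `e = (μ ⊗ ν)(C)`,
`liminf_j (μ ⊗ ν)(C ∩ R^{m_j} C ∩ R^{3 m_j} C) ≥ (e + e² + 2 e³)/4`. -/
theorem product_triple_intersection_liminf
    {X Y : Type*} [MeasurableSpace X] [MeasurableSpace Y]
    (μ : Measure X) (ν : Measure Y) [IsProbabilityMeasure μ] [IsProbabilityMeasure ν]
    (S : X ≃ᵐ X) (hS : MeasurePreserving S μ μ)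
    (T : Y ≃ᵐ Y) (hT : MeasurePreserving T ν ν)
    (m : ℕ → ℕ) (hm : StrictMono m)
    (hSrigid : ∀ A : Set X, MeasurableSet A →
      Tendsto (fun j => μ (A ∆ ((⇑S)^[m j] '' A))) atTop (nhds 0))
    (hTmix : ∀ B : Set Y, MeasurableSet B →
      Tendsto (fun j => 4 * (ν (B ∩ (⇑T)^[m j] '' B ∩ (⇑T)^[3 * m j] '' B)).toReal) atTop
        (nhds ((ν B).toReal + (ν B).toReal ^ 2 + 2 * (ν B).toReal ^ 3))) :
    ∀ C : Set (X × Y), MeasurableSet C →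
      (((μ.prod ν) C).toReal + ((μ.prod ν) C).toReal ^ 2
          + 2 * ((μ.prod ν) C).toReal ^ 3) / 4 ≤
        atTop.liminf (fun j =>
          ((μ.prod ν) (C ∩ (⇑(S.prodCongr T))^[m j] '' C
            ∩ (⇑(S.prodCongr T))^[3 * m j] '' C)).toReal) := by
  intro C hC
  simp only [inter_image_iterate_inter_image_iterate_three_mul, prodCongr_symm_iterate] at hTmix ⊢
  exact product_triple_intersection_liminf_general μ ν {0, 1, 3}
    (fun k j ↦ ((hS.symm S).iterate (m j * k)).measurable)
    (fun k j ↦ (hT.symm T).iterate (m j * k)) (isRigid_symm_iterate_mul hS hSrigid)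
    convexOn_add_sq_add_two_mul_cube_div_four (by fun_prop)
    (fun B hB ↦ by simpa [measureReal_def] using ((hTmix B hB).div_const 4).liminf_eq.ge) hC
end

section
/- Let a ∈ (0, 1], let (X, μ) be a probability space and S an automorphism of (X, μ) that is a-rigid along a strictly increasing sequence of natural numbers (n_j), in the sense that for every measurable set A ⊆ X, liminf_{j→∞} μ(A ∩ S^{n_j} A) ≥ a·μ(A). Then for any probability space (Y, ν), the product automorphism S × Id of (X × Y, μ ⊗ ν), given by (x, y) ↦ (S x, y), is a-rigid along the same sequence: for every measurable set C ⊆ X × Y, liminf_{j→∞} (μ ⊗ ν)(C ∩ (S × Id)^{n_j} C) ≥ a·(μ ⊗ ν)(C). -/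
open MeasureTheory Filter
open scoped ENNReal

/-!
The horizontal sections of `C ∩ (T × id) '' C` are `Cʸ ∩ T '' Cʸ`, where `Cʸ = {x | (x, y) ∈ C}`.
Rigidity of `T` bounds the lower limit of their measures from below by `c * μ Cʸ`; integrating
over `y`, Fatou's lemma moves the lower limit outside the integral.
-/

section Maps

variable {X : Type*}

theorem measurableEmbedding_iterate [MeasurableSpace X] {f : X → X} (hf : MeasurableEmbedding f)
    (k : ℕ) : MeasurableEmbedding f^[k] := by
  induction k with
  | zero => exact .id
  | succ k ih => exact ih.comp hf

theorem iterate_prodCongr_refl {Y : Type*} [MeasurableSpace X] [MeasurableSpace Y] (e : X ≃ᵐ X)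
    (k : ℕ) : (⇑(e.prodCongr (MeasurableEquiv.refl Y)))^[k] = Prod.map e^[k] id :=
  (Prod.map_iterate e id k).trans (by rw [Function.iterate_id])

theorem preimage_prodMk_image_prodMap_id {X' Y : Type*} (f : X → X') (C : Set (X × Y)) (y : Y) :
    (·, y) ⁻¹' (Prod.map f id '' C) = f '' ((·, y) ⁻¹' C) := by
  ext x
  simp

end Maps

section PartialRigidity

variable {ι X : Type*} [MeasurableSpace X] {μ : Measure X} {T : ι → X → X} {l : Filter ι}

/-- Partial rigidity of a family of maps `T j` along a filter, with rigidity constant `c`.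
An automorphism `S` is `c`-rigid along `(n_j)` when this holds for `T j = S^[n j]` and
`l = atTop`. Measures are kept in `ℝ≥0∞`, so that the lower limit is never a junk value. -/
def IsPartiallyRigid (c : ℝ≥0∞) (μ : Measure X) (T : ι → X → X) (l : Filter ι) : Prop :=
  ∀ A : Set X, MeasurableSet A → c * μ A ≤ liminf (fun j => μ (A ∩ T j '' A)) l

theorem isPartiallyRigid_ofReal_iff [IsFiniteMeasure μ] [l.NeBot] {a : ℝ} :
    IsPartiallyRigid (ENNReal.ofReal a) μ T l ↔ ∀ A : Set X, MeasurableSet A →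
      a * (μ A).toReal ≤ liminf (fun j => (μ (A ∩ T j '' A)).toReal) l := by
  refine forall₂_congr fun A _ => ?_
  have hbound (j : ι) : μ (A ∩ T j '' A) ≤ μ A := measure_mono Set.inter_subset_left
  have hlim : liminf (fun j => μ (A ∩ T j '' A)) l ≠ ∞ :=
    ne_top_of_le_ne_top (measure_ne_top μ A)
      (liminf_le_of_frequently_le' (.of_forall hbound))
  rw [ENNReal.liminf_toReal_eq (measure_ne_top μ A) (.of_forall hbound),
    ← ENNReal.ofReal_le_iff_le_toReal hlim, ENNReal.ofReal_mul' ENNReal.toReal_nonneg,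
    ENNReal.ofReal_toReal (measure_ne_top μ A)]

theorem product_with_id_partially_rigid_general {Y : Type*} [MeasurableSpace Y] {ν : Measure Y}
    [SFinite μ] [SFinite ν] [l.IsCountablyGenerated] {c : ℝ≥0∞}
    (hT : ∀ j, MeasurableEmbedding (T j)) (hrig : IsPartiallyRigid c μ T l) :
    IsPartiallyRigid c (μ.prod ν) (fun j => Prod.map (T j) (id : Y → Y)) l := by
  intro C hC
  have hmeas (j : ι) : MeasurableSet (C ∩ Prod.map (T j) id '' C) :=
    hC.inter (((hT j).prodMap .id).measurableSet_image.2 hC)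
  calc c * μ.prod ν C
      = ∫⁻ y, c * μ ((·, y) ⁻¹' C) ∂ν := by
        rw [Measure.prod_apply_symm hC, lintegral_const_mul _ (measurable_measure_prodMk_right hC)]
    _ ≤ ∫⁻ y, liminf (fun j => μ ((·, y) ⁻¹' (C ∩ Prod.map (T j) id '' C))) l ∂ν := by
        refine lintegral_mono fun y => ?_
        simp only [Set.preimage_inter, preimage_prodMk_image_prodMap_id]
        exact hrig _ (measurable_prodMk_right hC)
    _ ≤ liminf (fun j => ∫⁻ y, μ ((·, y) ⁻¹' (C ∩ Prod.map (T j) id '' C)) ∂ν) l :=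
        lintegral_liminf_le fun j => measurable_measure_prodMk_right (hmeas j)
    _ = liminf (fun j => μ.prod ν (C ∩ Prod.map (T j) id '' C)) l := by
        simp only [Measure.prod_apply_symm (hmeas _)]

end PartialRigidity

/-- If `S` is `a`-rigid along `(n_j)` (that is,
`liminf_j μ(A ∩ S^{n_j} A) ≥ a·μ(A)` for every measurable `A`), then the product `S × Id`
is `a`-rigid along the same sequence. -/
theorem product_with_id_partially_rigid
    {X Y : Type*} [MeasurableSpace X] [MeasurableSpace Y]
    (μ : Measure X) (ν : Measure Y) [IsProbabilityMeasure μ] [IsProbabilityMeasure ν]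
    (a : ℝ) (ha : a ∈ Set.Ioc (0 : ℝ) 1)
    (S : X ≃ᵐ X) (hS : MeasurePreserving S μ μ)
    (n : ℕ → ℕ) (hn : StrictMono n)
    (hrig : ∀ A : Set X, MeasurableSet A →
      a * (μ A).toReal ≤ atTop.liminf fun j => (μ (A ∩ (⇑S)^[n j] '' A)).toReal) :
    ∀ C : Set (X × Y), MeasurableSet C →
      a * ((μ.prod ν) C).toReal ≤
        atTop.liminf fun j =>
          ((μ.prod ν) (C ∩ (⇑(S.prodCongr (MeasurableEquiv.refl Y)))^[n j] '' C)).toReal := by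
  simp only [iterate_prodCongr_refl]
  exact isPartiallyRigid_ofReal_iff.1 <| product_with_id_partially_rigid_general
    (fun j => measurableEmbedding_iterate S.measurableEmbedding (n j))
    (isPartiallyRigid_ofReal_iff.2 hrig)
end

section
/- Let (X, μ) be a probability space and S an automorphism of (X, μ). Let T = S⁻¹ × S × S be the automorphism of (X³, μ ⊗ μ ⊗ μ) given by (x₁, x₂, x₃) ↦ (S⁻¹ x₁, S x₂, S x₃), and let T^∞ be the automorphism of the countable product space (X³)^ℕ, equipped with the infinite product of countably many copies of the probability measure μ ⊗ μ ⊗ μ, which applies T in every coordinate: (z_i)_{i∈ℕ} ↦ (T z_i)_{i∈ℕ}. Then T^∞ is conjugate to its inverse: there exists an automorphism Φ of the product probability space (X³)^ℕ such that Φ ∘ T^∞ = (T^∞)⁻¹ ∘ Φ. -/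
open MeasureTheory Filter
open scoped ENNReal

/-!
Flatten `(X³)^ℕ` to `X^(ℕ × 3)`: there `T^∞` acts by `S⁻¹` on the coordinates in `ℕ × {0}` and by
`S` on those in `ℕ × {1, 2}`. Both sets of coordinates are countably infinite, so some permutation
of `ℕ × 3` exchanges them, and permuting the coordinates preserves the product measure and turns
`T^∞` into its inverse. Nothing changes if `ℕ` is replaced by any infinite set `ι`, because
`ι × F ≃ ι` for every nonempty finite `F`.
-/

section Permutations

lemma nonempty_prod_equiv_left (α β : Type*) [Infinite α] [Countable β] [Nonempty β] :
    Nonempty (α × β ≃ α) := by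
  rw [← Cardinal.lift_mk_eq', Cardinal.mk_prod, Cardinal.lift_mul, Cardinal.lift_lift,
    Cardinal.lift_lift]
  refine Cardinal.mul_eq_left ?_ ?_ ?_
  · exact Cardinal.aleph0_le_lift.2 (Cardinal.aleph0_le_mk α)
  · exact (Cardinal.lift_le_aleph0.2 Cardinal.mk_le_aleph0).trans
      (Cardinal.aleph0_le_lift.2 (Cardinal.aleph0_le_mk α))
  · simp only [ne_eq, Cardinal.lift_eq_zero, Cardinal.mk_ne_zero, not_false_eq_true]

lemma exists_perm_mem_iff_notMem {α : Type*} {s : Set α} (f : s ≃ (sᶜ : Set α)) :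
    ∃ e : Equiv.Perm α, ∀ a, e a ∈ s ↔ a ∉ s := by
  classical
  let e : Equiv.Perm α :=
    (Equiv.Set.sumCompl s).symm.trans <|
      (f.sumCongr f.symm).trans <| (Equiv.sumComm _ _).trans (Equiv.Set.sumCompl s)
  refine ⟨e, fun a ↦ ?_⟩
  by_cases ha : a ∈ s
  · have he : e a = f ⟨a, ha⟩ := by simp [e, Equiv.Set.sumCompl_symm_apply_of_mem ha]
    simpa only [he, ha, not_true_eq_false, iff_false] using Set.notMem_of_mem_compl (f ⟨a, ha⟩).2
  · have he : e a = f.symm ⟨a, ha⟩ := by simp [e, Equiv.Set.sumCompl_symm_apply_of_notMem ha]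
    simpa only [he, ha, not_false_eq_true, iff_true] using (f.symm ⟨a, ha⟩).2

lemma exists_perm_snd_mem_iff_notMem {ι κ : Type*} [Infinite ι] [Countable κ] {t : Set κ}
    (ht : t.Nonempty) (htc : tᶜ.Nonempty) :
    ∃ e : Equiv.Perm (ι × κ), ∀ p, (e p).2 ∈ t ↔ p.2 ∉ t := by
  have preimage_equiv (u : Set κ) (hu : u.Nonempty) :
      Nonempty ((Prod.snd ⁻¹' u : Set (ι × κ)) ≃ ι) := by
    have := hu.to_subtype
    obtain ⟨f⟩ := nonempty_prod_equiv_left ι u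
    rw [← Set.univ_prod]
    exact ⟨(Equiv.Set.prod _ _).trans (((Equiv.Set.univ ι).prodCongr (Equiv.refl u)).trans f)⟩
  obtain ⟨f⟩ := preimage_equiv t ht
  obtain ⟨g⟩ := preimage_equiv tᶜ htc
  exact exists_perm_mem_iff_notMem (f.trans g.symm)

end Permutations

section Symmetric

variable {α β : Type*} [MeasurableSpace α] [MeasurableSpace β] {μ : Measure α} {ν : Measure β}

/-- `R` is symmetric: some automorphism of the measure space `(α, μ)` conjugates `R` to `R⁻¹`.
Only the conjugating map is asked to preserve `μ`. -/
def IsSymmetricAutomorphism (μ : Measure α) (R : α ≃ᵐ α) : Prop :=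
  ∃ Φ : α ≃ᵐ α, MeasurePreserving Φ μ μ ∧ ∀ x, Φ (R x) = R.symm (Φ x)

lemma IsSymmetricAutomorphism.of_semiconj {R : α ≃ᵐ α} {Q : β ≃ᵐ β}
    (hR : IsSymmetricAutomorphism μ R) (e : α ≃ᵐ β) (he : MeasurePreserving e μ ν)
    (hRQ : Function.Semiconj e R Q) : IsSymmetricAutomorphism ν Q := by
  obtain ⟨Φ, hΦ, hΦR⟩ := hR
  refine ⟨(e.symm.trans Φ).trans e, he.comp (hΦ.comp (he.symm e)), fun y ↦ ?_⟩
  obtain ⟨x, rfl⟩ := e.surjective y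
  have hRQ_symm : Function.Semiconj e R.symm Q.symm :=
    hRQ.inverses_right R.right_inv Q.left_inv
  simp only [MeasurableEquiv.trans_apply, ← hRQ x, MeasurableEquiv.symm_apply_apply]
  rw [hΦR, hRQ_symm]

end Symmetric

section InfiniteProduct

variable {ι : Type*} {X Y : ι → Type*} [∀ i, MeasurableSpace (X i)] [∀ i, MeasurableSpace (Y i)]

lemma measurePreserving_piCongrRight_infinitePi {μ : ∀ i, Measure (X i)} {ν : ∀ i, Measure (Y i)}
    [∀ i, IsProbabilityMeasure (μ i)] {e : ∀ i, X i ≃ᵐ Y i}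
    (he : ∀ i, MeasurePreserving (e i) (μ i) (ν i)) :
    MeasurePreserving (MeasurableEquiv.piCongrRight e)
      (Measure.infinitePi μ) (Measure.infinitePi ν) where
  measurable := MeasurableEquiv.measurable _
  map_eq := by
    have h := Measure.infinitePi_map_pi (μ := μ) fun i ↦ (e i).measurable
    simp only [(he _).map_eq] at h
    exact h

end InfiniteProduct

section Powers

variable {X : Type*} [MeasurableSpace X] (μ : Measure X)

lemma isSymmetricAutomorphism_piCongrRight_of_perm [IsProbabilityMeasure μ] {ι : Type*}
    (A : ι → X ≃ᵐ X) (e : Equiv.Perm ι) (hA : ∀ i, A (e i) = (A i).symm) :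
    IsSymmetricAutomorphism (Measure.infinitePi fun _ ↦ μ) (MeasurableEquiv.piCongrRight A) := by
  let Ψ : (ι → X) ≃ᵐ (ι → X) := MeasurableEquiv.piCongrLeft (fun _ ↦ X) e
  have hΨ : MeasurePreserving Ψ (Measure.infinitePi fun _ ↦ μ) (Measure.infinitePi fun _ ↦ μ) :=
    ⟨Ψ.measurable, Measure.infinitePi_map_piCongrLeft (fun _ ↦ μ) e⟩
  have hΨ_symm_apply (w : ι → X) (i : ι) : Ψ.symm w i = w (e i) := rfl
  refine ⟨Ψ.symm, hΨ.symm Ψ, fun w ↦ funext fun i ↦ ?_⟩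
  calc Ψ.symm (MeasurableEquiv.piCongrRight A w) i
      = A (e i) (w (e i)) := hΨ_symm_apply _ i
    _ = (A i).symm (Ψ.symm w i) := by rw [hA, hΨ_symm_apply]

/-- Functions on `Fin 3` as triples `(w 0, w 1, w 2)`. -/
def finThreeArrow : (Fin 3 → X) ≃ᵐ X × X × X :=
  (MeasurableEquiv.piFinSuccAbove (fun _ ↦ X) 0).trans
    ((MeasurableEquiv.refl X).prodCongr MeasurableEquiv.finTwoArrow)

lemma measurePreserving_finThreeArrow [SigmaFinite μ] :
    MeasurePreserving finThreeArrow (Measure.pi fun _ ↦ μ) (μ.prod (μ.prod μ)) :=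
  ((MeasurePreserving.id μ).prod (measurePreserving_finTwoArrow μ)).comp
    (measurePreserving_piFinSuccAbove (fun _ ↦ μ) 0)

/-- Grouping the coordinates of `X^(ι × 3)` into triples, which identifies it with `(X³)^ι`. -/
def arrowTriple (ι X : Type*) [MeasurableSpace X] : (ι × Fin 3 → X) ≃ᵐ (ι → X × X × X) :=
  (MeasurableEquiv.curry ι (Fin 3) X).trans (MeasurableEquiv.piCongrRight fun _ ↦ finThreeArrow)

lemma measurePreserving_arrowTriple [IsProbabilityMeasure μ] (ι : Type*) :
    MeasurePreserving (arrowTriple ι X) (Measure.infinitePi fun _ ↦ μ)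
      (Measure.infinitePi fun _ ↦ μ.prod (μ.prod μ)) := by
  have hcurry : MeasurePreserving (MeasurableEquiv.curry ι (Fin 3) X)
      (Measure.infinitePi fun _ ↦ μ) (Measure.infinitePi fun _ ↦ Measure.pi fun _ ↦ μ) := by
    refine ⟨MeasurableEquiv.measurable _, ?_⟩
    simp only [← Measure.infinitePi_eq_pi]
    exact Measure.infinitePi_map_curry fun _ _ ↦ μ
  exact (measurePreserving_piCongrRight_infinitePi
    fun _ ↦ measurePreserving_finThreeArrow μ).comp hcurry

theorem infinite_power_symmetric_general [IsProbabilityMeasure μ] (S : X ≃ᵐ X)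
    (ι : Type*) [Infinite ι] :
    IsSymmetricAutomorphism (Measure.infinitePi fun _ : ι ↦ μ.prod (μ.prod μ))
      (MeasurableEquiv.piCongrRight fun _ ↦ S.symm.prodCongr (S.prodCongr S)) := by
  let A (p : ι × Fin 3) : X ≃ᵐ X := if p.2 ∈ ({0} : Set (Fin 3)) then S.symm else S
  obtain ⟨e, he⟩ := exists_perm_snd_mem_iff_notMem (ι := ι) (t := {(0 : Fin 3)})
    (Set.singleton_nonempty 0) ⟨1, by decide⟩
  have hA (p : ι × Fin 3) : A (e p) = (A p).symm := by
    by_cases hp : p.2 ∈ ({0} : Set (Fin 3))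
    · simp only [A, if_pos hp, if_neg fun h ↦ (he p).1 h hp]
      rfl
    · simp only [A, if_neg hp, if_pos ((he p).2 hp)]
  exact (isSymmetricAutomorphism_piCongrRight_of_perm μ A e hA).of_semiconj (arrowTriple ι X)
    (measurePreserving_arrowTriple μ ι) fun _ ↦ rfl

end Powers

/-- Let `S` be a measure-preserving automorphism of a probability space `(X, μ)`, let
`T = S⁻¹ × S × S` act on `X³` with the measure `μ ⊗ μ ⊗ μ`, and let `T^∞` be the automorphism
of the countable power `(X³)^ℕ` applying `T` in every coordinate, where `(X³)^ℕ` carries the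
infinite product measure `ξ` of countably many copies of `μ ⊗ μ ⊗ μ` (characterized as the
projective limit of the finite products). Then `T^∞` is conjugate to its inverse by a
measure-preserving automorphism. -/
theorem infinite_power_symmetric
    {X : Type*} [MeasurableSpace X]
    (μ : Measure X) [IsProbabilityMeasure μ]
    (S : X ≃ᵐ X) (hS : MeasurePreserving S μ μ)
    (ξ : Measure (ℕ → X × X × X)) [IsProbabilityMeasure ξ]
    (hξ : IsProjectiveLimit ξ
      (fun _ : Finset ℕ => Measure.pi fun _ => μ.prod (μ.prod μ))) :
    ∃ Φ : (ℕ → X × X × X) ≃ᵐ (ℕ → X × X × X),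
      MeasurePreserving Φ ξ ξ ∧
      ∀ z, Φ (MeasurableEquiv.piCongrRight (fun _ : ℕ => S.symm.prodCongr (S.prodCongr S)) z)
          = (MeasurableEquiv.piCongrRight (fun _ : ℕ => S.symm.prodCongr (S.prodCongr S))).symm
              (Φ z) := by
  obtain rfl := hξ.unique (Measure.isProjectiveLimit_infinitePi fun _ ↦ μ.prod (μ.prod μ))
  exact infinite_power_symmetric_general μ S ℕ
end
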